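/- arXiv:1409.4799 — 2 statements merged into one kernel-verified Lean document; each statement's English description precedes it below -/
import Mathlib

section
/- In ℝ², let B = (0,0), C = (1,0), C′ = (1/2, 1), and let g be the perpendicular bisector of C and C′. Then: (i) g meets the line {p₁ = 0} in exactly the point E = (0, 1/8); (ii) the reflection of B across the line g is W = (−1/10, 1/5); (iii) the line through C′ and W meets the line {p₁ = 0} in exactly the point L = (0, 1/3); (iv) the triangle with vertices L, W, E is a right triangle with the right angle at W and side lengths dist(W,E) = 1/8, dist(L,W) = 1/6, dist(L,E) = 5/24; i.e. its sides are proportional to the Pythagorean triple (3,4,5). -/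
noncomputable section
open Real EuclideanGeometry

/-- Points of the Euclidean plane `ℝ²`. -/
abbrev Pt : Type := EuclideanSpace ℝ (Fin 2)

/-- The point of `ℝ²` with coordinates `(x, y)`. -/
def pt (x y : ℝ) : Pt := !₂[x, y]

/-- The perpendicular bisector of two points `U`, `V` of the plane: the crease
obtained by folding `U` onto `V`. -/
def perpBisector (U V : Pt) : Set Pt := {P | dist P U = dist P V}

/- Put `n = 1 - t` and fold `C = (1, 0)` onto `(t, 1)`.  The sides of the triangle `L W E` are then
proportional to `1 - n²`, `2 n`, `1 + n²`, the classical parametrization of Pythagorean triples, so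
the right angle at `W` is the converse of Pythagoras' theorem; `t = 1/2` gives `3 : 4 : 5`. -/

section Coordinates

variable {a b c d : ℝ}

@[simp]
theorem pt_apply_zero (x y : ℝ) : pt x y 0 = x := rfl

@[simp]
theorem pt_apply_one (x y : ℝ) : pt x y 1 = y := rfl

theorem eq_pt_iff {P : Pt} {x y : ℝ} : P = pt x y ↔ P 0 = x ∧ P 1 = y := by
  simp only [PiLp.ext_iff, Fin.forall_fin_two, pt_apply_zero, pt_apply_one]

theorem dist_eq_sqrt_coords (P Q : Pt) :
    dist P Q = √((P 0 - Q 0) ^ 2 + (P 1 - Q 1) ^ 2) := by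
  simp only [EuclideanSpace.dist_eq, Fin.sum_univ_two, Real.dist_eq, sq_abs]

theorem dist_pt_pt_of_fst_eq (x y z : ℝ) : dist (pt x y) (pt x z) = |y - z| := by
  simp [dist_eq_sqrt_coords, Real.sqrt_sq_eq_abs]

theorem mem_perpBisector_pt_iff {P : Pt} :
    P ∈ perpBisector (pt a b) (pt c d) ↔
      2 * (c - a) * P 0 + 2 * (d - b) * P 1 = c ^ 2 + d ^ 2 - (a ^ 2 + b ^ 2) := by
  change dist P (pt a b) = dist P (pt c d) ↔ _
  rw [dist_eq_sqrt_coords, dist_eq_sqrt_coords, Real.sqrt_inj (by positivity) (by positivity)]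
  simp only [pt_apply_zero, pt_apply_one]
  constructor <;> intro h <;> linear_combination h

theorem perpBisector_pt_inter_vertical (hbd : b ≠ d) (x : ℝ) :
    perpBisector (pt a b) (pt c d) ∩ {p : Pt | p 0 = x} =
      {pt x ((c ^ 2 + d ^ 2 - (a ^ 2 + b ^ 2) - 2 * (c - a) * x) / (2 * (d - b)))} := by
  have hslope : 2 * (d - b) ≠ 0 := mul_ne_zero two_ne_zero (sub_ne_zero.mpr hbd.symm)
  ext P
  simp only [Set.mem_inter_iff, mem_perpBisector_pt_iff, Set.mem_ofPred_eq,
    Set.mem_singleton_iff, eq_pt_iff, eq_div_iff hslope]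
  constructor
  · rintro ⟨h, rfl⟩
    exact ⟨rfl, by linear_combination h⟩
  · rintro ⟨rfl, h⟩
    exact ⟨by linear_combination h, rfl⟩

theorem perpBisector_pt_eq_of_proportional {a' b' c' d' k : ℝ} (hk : k ≠ 0)
    (hfst : c' - a' = k * (c - a)) (hsnd : d' - b' = k * (d - b))
    (hconst : c' ^ 2 + d' ^ 2 - (a' ^ 2 + b' ^ 2) = k * (c ^ 2 + d ^ 2 - (a ^ 2 + b ^ 2))) :
    perpBisector (pt a' b') (pt c' d') = perpBisector (pt a b) (pt c d) := by
  ext P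
  rw [mem_perpBisector_pt_iff, mem_perpBisector_pt_iff, hfst, hsnd, hconst]
  constructor <;> intro h
  · exact mul_left_cancel₀ hk (by linear_combination h)
  · linear_combination k * h

theorem affineSpan_pt_pair_inter_vertical (hac : a ≠ c) (x : ℝ) :
    (line[ℝ, pt a b, pt c d] : Set Pt) ∩ {p : Pt | p 0 = x} =
      {pt x (AffineMap.lineMap b d ((x - a) / (c - a)))} := by
  have hca : c - a ≠ 0 := sub_ne_zero.mpr hac.symm
  have lineMap_pt (r : ℝ) : AffineMap.lineMap (pt a b) (pt c d) r =
      pt (AffineMap.lineMap a c r) (AffineMap.lineMap b d r) := by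
    simp [eq_pt_iff, AffineMap.lineMap_apply]
  ext P
  simp only [Set.mem_inter_iff, SetLike.mem_coe, mem_affineSpan_pair_iff_exists_lineMap_eq,
    lineMap_pt, Set.mem_ofPred_eq, Set.mem_singleton_iff]
  constructor
  · rintro ⟨⟨r, rfl⟩, hr⟩
    have hr : r = (x - a) / (c - a) := by
      rw [eq_div_iff hca, ← hr, pt_apply_zero, AffineMap.lineMap_apply_ring']
      ring
    subst hr
    simp [AffineMap.lineMap_apply_ring', hca]
  · rintro rfl
    refine ⟨⟨(x - a) / (c - a), ?_⟩, pt_apply_zero ..⟩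
    simp [AffineMap.lineMap_apply_ring', hca]

end Coordinates

section Fold

/-- The point `E` where the crease folding `(1, 0)` onto `(t, 1)` meets the side `AB`. -/
def creaseFoot (t : ℝ) : Pt := pt 0 (t ^ 2 / 2)

/-- The image `W` of the corner `B = (0, 0)` under the fold taking `(1, 0)` to `(t, 1)`. -/
def foldedCorner (t : ℝ) : Pt :=
  pt (-(t ^ 2 * (1 - t) / (1 + (1 - t) ^ 2))) (t ^ 2 / (1 + (1 - t) ^ 2))

/-- The point `L` where the image of the side `BC` under the fold taking `(1, 0)` to `(t, 1)`
crosses the side `AB`.  At `t = 2` the two are parallel and the division returns `0`. -/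
def edgeCrossing (t : ℝ) : Pt := pt 0 (t / (2 - t))

variable {t : ℝ}

theorem crease_inter_yAxis (t : ℝ) :
    perpBisector (pt 1 0) (pt t 1) ∩ {p : Pt | p 0 = 0} = {creaseFoot t} := by
  rw [perpBisector_pt_inter_vertical zero_ne_one, creaseFoot]
  ring_nf

theorem perpBisector_foldedCorner (ht : t ≠ 0) :
    perpBisector (pt 0 0) (foldedCorner t) = perpBisector (pt 1 0) (pt t 1) := by
  have hs : 1 + (1 - t) ^ 2 ≠ 0 := by positivity
  apply perpBisector_pt_eq_of_proportional (k := t ^ 2 / (1 + (1 - t) ^ 2)) (by positivity) <;>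
  · field_simp
    ring

theorem foldedEdge_inter_yAxis (ht₀ : t ≠ 0) (ht₂ : t ≠ 2) :
    (line[ℝ, pt t 1, foldedCorner t] : Set Pt) ∩ {p : Pt | p 0 = 0} = {edgeCrossing t} := by
  have hs : 1 + (1 - t) ^ 2 ≠ 0 := by positivity
  have h₂ : 2 - t ≠ 0 := sub_ne_zero.mpr ht₂.symm
  have hrun : -(t ^ 2 * (1 - t) / (1 + (1 - t) ^ 2)) - t =
      -(t * (2 - t) / (1 + (1 - t) ^ 2)) := by
    field_simp
    ring
  have hrun_ne : t ≠ -(t ^ 2 * (1 - t) / (1 + (1 - t) ^ 2)) := by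
    rw [ne_comm, ← sub_ne_zero, hrun]
    exact neg_ne_zero.mpr (div_ne_zero (mul_ne_zero ht₀ h₂) hs)
  rw [foldedCorner, affineSpan_pt_pair_inter_vertical hrun_ne, hrun, edgeCrossing,
    AffineMap.lineMap_apply_ring']
  congr 2
  field_simp
  ring

theorem dist_foldedCorner_creaseFoot (ht : t ≠ 0) :
    dist (foldedCorner t) (creaseFoot t) = t ^ 2 / 2 := by
  have hmem : creaseFoot t ∈ perpBisector (pt 0 0) (foldedCorner t) := by
    rw [perpBisector_foldedCorner ht]
    exact ((crease_inter_yAxis t).ge rfl).1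
  calc dist (foldedCorner t) (creaseFoot t)
      = dist (creaseFoot t) (foldedCorner t) := dist_comm _ _
    _ = dist (creaseFoot t) (pt 0 0) := hmem.symm
    _ = |t ^ 2 / 2 - 0| := dist_pt_pt_of_fst_eq _ _ _
    _ = t ^ 2 / 2 := by rw [sub_zero, abs_of_nonneg (by positivity)]

theorem dist_edgeCrossing_foldedCorner (ht₂ : t ≠ 2) :
    dist (edgeCrossing t) (foldedCorner t) = |t * (1 - t) / (2 - t)| := by
  have hs : 1 + (1 - t) ^ 2 ≠ 0 := by positivity
  have h₂ : 2 - t ≠ 0 := sub_ne_zero.mpr ht₂.symm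
  rw [dist_eq_sqrt_coords, ← Real.sqrt_sq_eq_abs]
  simp only [edgeCrossing, foldedCorner, pt_apply_zero, pt_apply_one]
  congr 1
  field_simp
  ring

theorem dist_edgeCrossing_creaseFoot (ht₂ : t ≠ 2) :
    dist (edgeCrossing t) (creaseFoot t) = |t * (1 + (1 - t) ^ 2) / (2 * (2 - t))| := by
  have h₂ : 2 - t ≠ 0 := sub_ne_zero.mpr ht₂.symm
  rw [edgeCrossing, creaseFoot, dist_pt_pt_of_fst_eq]
  congr 1
  field_simp
  ring

theorem angle_edgeCrossing_foldedCorner_creaseFoot (ht₀ : t ≠ 0) (ht₂ : t ≠ 2) :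
    ∠ (edgeCrossing t) (foldedCorner t) (creaseFoot t) = π / 2 := by
  have h₂ : 2 - t ≠ 0 := sub_ne_zero.mpr ht₂.symm
  rw [← dist_sq_eq_dist_sq_add_dist_sq_iff_angle_eq_pi_div_two, dist_comm (creaseFoot t),
    dist_edgeCrossing_creaseFoot ht₂, dist_edgeCrossing_foldedCorner ht₂,
    dist_foldedCorner_creaseFoot ht₀, abs_mul_abs_self, abs_mul_abs_self]
  field_simp
  ring

end Fold

theorem haga_egyptian_triangle_T3_general {t : ℝ} (ht₀ : 0 < t) (ht₁ : t < 1) :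
    perpBisector (pt 1 0) (pt t 1) ∩ {p : Pt | p 0 = 0} = {creaseFoot t} ∧
    perpBisector (pt 0 0) (foldedCorner t) = perpBisector (pt 1 0) (pt t 1) ∧
    (line[ℝ, pt t 1, foldedCorner t] : Set Pt) ∩ {p : Pt | p 0 = 0} = {edgeCrossing t} ∧
    ∠ (edgeCrossing t) (foldedCorner t) (creaseFoot t) = π / 2 ∧
    dist (foldedCorner t) (creaseFoot t) = t ^ 2 / 2 ∧
    dist (edgeCrossing t) (foldedCorner t) = t * (1 - t) / (2 - t) ∧
    dist (edgeCrossing t) (creaseFoot t) = t * (1 + (1 - t) ^ 2) / (2 * (2 - t)) := by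
  have h₁ : 0 < 1 - t := sub_pos.mpr ht₁
  have h₂ : 0 < 2 - t := by linarith
  have ht₂ : t ≠ 2 := by linarith
  refine ⟨crease_inter_yAxis t, perpBisector_foldedCorner ht₀.ne',
    foldedEdge_inter_yAxis ht₀.ne' ht₂,
    angle_edgeCrossing_foldedCorner_creaseFoot ht₀.ne' ht₂,
    dist_foldedCorner_creaseFoot ht₀.ne', ?_, ?_⟩
  · rw [dist_edgeCrossing_foldedCorner ht₂, abs_of_pos (div_pos (mul_pos ht₀ h₁) h₂)]
  · rw [dist_edgeCrossing_creaseFoot ht₂, abs_of_pos (by positivity)]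

/-- **Haga's third Egyptian triangle.**  In the unit square with `B=(0,0)`, `C=(1,0)`
and `C'=(1/2,1)`, let `g` be the crease folding `C` onto `C'`.  Then (i) `g` meets the
line `{p | p 0 = 0}` in exactly the point `E=(0,1/8)`; (ii) the fold (reflection
across `g`) takes `B` to `W=(-1/10,1/5)`, i.e. `g` is the perpendicular bisector of
`B` and `W`; (iii) the line through `C'` and `W` meets `{p | p 0 = 0}` in exactly the
point `L=(0,1/3)`; (iv) the triangle `L, W, E` is right-angled at `W` with side lengths
`1/8`, `1/6`, `5/24`, i.e. proportional to the Pythagorean triple `(3,4,5)`. -/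
theorem haga_egyptian_triangle_T3
    (B : Pt) (hB : B = pt 0 0) (C : Pt) (hC : C = pt 1 0) (C' : Pt) (hC' : C' = pt (1/2) 1)
    (E : Pt) (hE : E = pt 0 (1/8)) (W : Pt) (hW : W = pt (-(1/10)) (1/5))
    (L : Pt) (hL : L = pt 0 (1/3)) :
    perpBisector C C' ∩ {p : Pt | p 0 = 0} = {E} ∧
    perpBisector B W = perpBisector C C' ∧
    (↑(affineSpan ℝ ({C', W} : Set Pt)) ∩ {p : Pt | p 0 = 0} = ({L} : Set Pt)) ∧
    ∠ L W E = π/2 ∧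
    dist W E = 1/8 ∧ dist L W = 1/6 ∧ dist L E = 5/24 := by
  subst hB hC hC' hE hW hL
  convert haga_egyptian_triangle_T3_general (t := 1 / 2) (by norm_num) (by norm_num) using 0
  norm_num [creaseFoot, foldedCorner, edgeCrossing]
end
end

section
/- Let d ∈ ℝ, let A = (a_x, a_y) with a_y ≠ 0, and let B = (b_x, b_y). Let X ≠ 0, put A′ = (a_x − X, 0), and suppose there exists B′ = (b′_x, d) with B′ ≠ B such that the perpendicular bisector of A and A′ equals the perpendicular bisector of B and B′ (a single fold maps A onto a point A′ of the x-axis and simultaneously B onto a point B′ of the parallel line {p₂ = d}). Then b′_x = ((d − b_y)·X + b_x·a_y)/a_y, and X satisfies the quadratic equation (a_y − b_y + d)·X² − 2·a_y·(a_x − b_x)·X − a_y²·(a_y − b_y − d) = 0. -/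
noncomputable section
open Real EuclideanGeometry

/-!
The common crease is orthogonal to both `A' - A` and `B' - B`, so these two vectors are parallel;
in coordinates this determines `b'_x`. The crease of `A` and `A'` also passes through the midpoint
of `B` and `B'`: expressing this as an orthogonality relation and eliminating `b'_x` gives the
quadratic equation for `X`.
-/

section InnerProduct

variable {V P : Type*} [NormedAddCommGroup V] [InnerProductSpace ℝ V] [MetricSpace P]
  [NormedAddTorsor V P] {p₁ p₂ q₁ q₂ : P}

theorem span_vsub_eq_of_perpBisector_eq
    (h : AffineSubspace.perpBisector p₁ p₂ = AffineSubspace.perpBisector q₁ q₂) :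
    ℝ ∙ (p₂ -ᵥ p₁) = ℝ ∙ (q₂ -ᵥ q₁) := by
  have horth : (ℝ ∙ (p₂ -ᵥ p₁))ᗮ = (ℝ ∙ (q₂ -ᵥ q₁))ᗮ := by
    simpa only [AffineSubspace.direction_perpBisector] using
      congrArg AffineSubspace.direction h
  simpa only [Submodule.orthogonal_orthogonal] using congrArg Submodule.orthogonal horth

theorem inner_midpoint_vsub_midpoint_eq_zero_of_perpBisector_eq
    (h : AffineSubspace.perpBisector p₁ p₂ = AffineSubspace.perpBisector q₁ q₂) :
    inner ℝ (midpoint ℝ q₁ q₂ -ᵥ midpoint ℝ p₁ p₂) (p₂ -ᵥ p₁) = 0 := by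
  rw [← AffineSubspace.mem_perpBisector_iff_inner_eq_zero, h]
  exact AffineSubspace.midpoint_mem_perpBisector q₁ q₂

end InnerProduct

theorem perpBisector_eq_coe (U V : Pt) : perpBisector U V = AffineSubspace.perpBisector U V :=
  Set.ext fun _ ↦ AffineSubspace.mem_perpBisector_iff_dist_eq.symm

theorem perpBisector_eq_iff {U V U' V' : Pt} : perpBisector U V = perpBisector U' V' ↔
    AffineSubspace.perpBisector U V = AffineSubspace.perpBisector U' V' := by
  rw [perpBisector_eq_coe, perpBisector_eq_coe, SetLike.coe_set_eq]

section Coordinates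

variable {x₁ y₁ x₂ y₂ u₁ v₁ u₂ v₂ : ℝ}

theorem pt_inj : pt x₁ y₁ = pt x₂ y₂ ↔ x₁ = x₂ ∧ y₁ = y₂ := by
  simp [pt]

theorem pt_sub_pt : pt x₁ y₁ - pt x₂ y₂ = pt (x₁ - x₂) (y₁ - y₂) := by
  ext i
  fin_cases i <;> simp [pt]

theorem smul_pt (t x y : ℝ) : t • pt x y = pt (t * x) (t * y) := by
  ext i
  fin_cases i <;> simp [pt]

theorem midpoint_pt :
    midpoint ℝ (pt x₁ y₁) (pt x₂ y₂) = pt ((x₁ + x₂) / 2) ((y₁ + y₂) / 2) := by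
  ext i
  fin_cases i <;> simp [pt, midpoint_eq_smul_add] <;> ring

theorem inner_pt : inner ℝ (pt x₁ y₁) (pt x₂ y₂) = x₁ * x₂ + y₁ * y₂ := by
  simp [pt, PiLp.inner_apply, Fin.sum_univ_two, mul_comm]

theorem mul_sub_eq_mul_sub_of_perpBisector_eq
    (h : perpBisector (pt x₁ y₁) (pt x₂ y₂) = perpBisector (pt u₁ v₁) (pt u₂ v₂)) :
    (x₂ - x₁) * (v₂ - v₁) = (y₂ - y₁) * (u₂ - u₁) := by
  have hmem : pt u₂ v₂ - pt u₁ v₁ ∈ ℝ ∙ (pt x₂ y₂ - pt x₁ y₁) := by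
    have hspan := span_vsub_eq_of_perpBisector_eq (perpBisector_eq_iff.mp h)
    simp only [vsub_eq_sub] at hspan
    exact hspan ▸ Submodule.mem_span_singleton_self _
  obtain ⟨t, ht⟩ := Submodule.mem_span_singleton.mp hmem
  rw [pt_sub_pt, pt_sub_pt, smul_pt, pt_inj] at ht
  rw [← ht.1, ← ht.2]
  ring

end Coordinates

/-- **Huzita's construction, parallel-lines case.**  Let `A = (a_x, a_y)` with
`a_y ≠ 0` and `B = (b_x, b_y)`.  If a single fold maps `A` onto `A' = (a_x - X, 0)`
on the x-axis (`X ≠ 0`) and simultaneously `B` onto some point `B' = (b'_x, d) ≠ B`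
of the parallel line `{p | p 1 = d}`, then `b'_x = ((d - b_y)X + b_x·a_y)/a_y` and
`X` satisfies `(a_y - b_y + d)X² - 2a_y(a_x - b_x)X - a_y²(a_y - b_y - d) = 0`. -/
theorem huzita_parallel_lines (d a_x a_y b_x b_y X b'_x : ℝ)
    (ha : a_y ≠ 0) (hX : X ≠ 0)
    (hne : pt b'_x d ≠ pt b_x b_y)
    (hfold : perpBisector (pt a_x a_y) (pt (a_x - X) 0)
      = perpBisector (pt b_x b_y) (pt b'_x d)) :
    b'_x = ((d - b_y)*X + b_x*a_y)/a_y ∧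
    (a_y - b_y + d)*X^2 - 2*a_y*(a_x - b_x)*X - a_y^2*(a_y - b_y - d) = 0 := by
  have hparallel : (a_x - X - a_x) * (d - b_y) = (0 - a_y) * (b'_x - b_x) :=
    mul_sub_eq_mul_sub_of_perpBisector_eq hfold
  have hmidpoint : ((b_x + b'_x) / 2 - (a_x + (a_x - X)) / 2) * (a_x - X - a_x) +
      ((b_y + d) / 2 - (a_y + 0) / 2) * (0 - a_y) = 0 := by
    simpa only [midpoint_pt, vsub_eq_sub, pt_sub_pt, inner_pt] using
      inner_midpoint_vsub_midpoint_eq_zero_of_perpBisector_eq (perpBisector_eq_iff.mp hfold)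
  constructor
  · rw [eq_div_iff ha]
    linear_combination hparallel
  · linear_combination -2 * a_y * hmidpoint - X * hparallel
end
end
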